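/- Let p ∈ (0,1/2], let λ = σ^{−2}((1−p)³ + p³), and let 0 < ρ ≤ 1/√12. Then for every f : {0,1}^n → ℝ, ‖T_ρ f‖₄⁴ ≤ Σ_{S⊆[n]} (3λρ⁴)^{|S|}·‖D_S f‖₂⁴ ≤ Σ_{S⊆[n]} (3σ²ρ⁴)^{|S|}·I_S(f)². -/

import Mathlib

open Finset

namespace GlobalHC

variable {n : ℕ}

/-- Expectation with respect to the `p`-biased measure on `{0,1}^n`. -/
noncomputable def Ep (p : ℝ) (f : (Fin n → Bool) → ℝ) : ℝ :=
  ∑ x : Fin n → Bool, (∏ i, if x i then p else 1 - p) * f x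

/-- The `r`-norm with respect to the `p`-biased measure. -/
noncomputable def pnorm (p r : ℝ) (f : (Fin n → Bool) → ℝ) : ℝ :=
  (Ep p fun x => |f x| ^ r) ^ (1 / r)

/-- The `p`-biased character `χ_S`. -/
noncomputable def chi (p : ℝ) (S : Finset (Fin n)) (x : Fin n → Bool) : ℝ :=
  ∏ i ∈ S, ((if x i then (1 : ℝ) else 0) - p) / Real.sqrt (p * (1 - p))

/-- The `p`-biased Fourier coefficient `f̂(S)`. -/
noncomputable def coeff (p : ℝ) (f : (Fin n → Bool) → ℝ) (S : Finset (Fin n)) : ℝ :=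
  Ep p fun x => f x * chi p S x

/-- The derivative `D_S f = Σ_{T ⊇ S} f̂(T) χ_{T∖S}`. -/
noncomputable def derivS (p : ℝ) (S : Finset (Fin n)) (f : (Fin n → Bool) → ℝ) :
    (Fin n → Bool) → ℝ :=
  fun x => ∑ T ∈ Finset.univ.filter (fun T => S ⊆ T), coeff p f T * chi p (T \ S) x

/-- The generalised influence `I_S(f) = σ^{-2|S|} Σ_{T ⊇ S} f̂(T)²`. -/
noncomputable def genInf (p : ℝ) (S : Finset (Fin n)) (f : (Fin n → Bool) → ℝ) : ℝ :=
  (∑ T ∈ Finset.univ.filter (fun T => S ⊆ T), coeff p f T ^ 2) / (p * (1 - p)) ^ S.card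

/-- The noise operator `T_ρ f = Σ_S ρ^{|S|} f̂(S) χ_S`. -/
noncomputable def noise (p ρ : ℝ) (f : (Fin n → Bool) → ℝ) : (Fin n → Bool) → ℝ :=
  fun x => ∑ S : Finset (Fin n), ρ ^ S.card * coeff p f S * chi p S x

/-- The degree-`r` truncation `f^{≤ r}`. -/
noncomputable def trunc (p : ℝ) (r : ℕ) (f : (Fin n → Bool) → ℝ) : (Fin n → Bool) → ℝ :=
  fun x => ∑ S ∈ Finset.univ.filter (fun S : Finset (Fin n) => S.card ≤ r),
    coeff p f S * chi p S x

/-- The restriction `f_{J→1}` setting all coordinates in `J` to `1`. -/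
def restrict1 (J : Finset (Fin n)) (f : (Fin n → Bool) → ℝ) : (Fin n → Bool) → ℝ :=
  fun x => f (fun i => if i ∈ J then true else x i)

/-- `f` is `(r,δ)`-global (for the `p`-biased measure). -/
def IsGlobal (p r δ : ℝ) (f : (Fin n → Bool) → ℝ) : Prop :=
  ∀ J : Finset (Fin n), (J.card : ℝ) ≤ r → Ep p (restrict1 J f) ≤ Ep p f + δ

/-- The total influence `I[f] = Σ_i Pr_{μ_p}[f(x ⊕ e_i) ≠ f(x)]`. -/
noncomputable def totalInf (p : ℝ) (f : (Fin n → Bool) → ℝ) : ℝ :=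
  ∑ i : Fin n, Ep p fun x => if f (Function.update x i (!x i)) = f x then 0 else 1

/-- Noise stability `Stab_ρ(f) = Σ_S ρ^{|S|} f̂(S)²` (w.r.t. `μ_p`). -/
noncomputable def stab (p ρ : ℝ) (f : (Fin n → Bool) → ℝ) : ℝ :=
  ∑ S : Finset (Fin n), ρ ^ S.card * coeff p f S ^ 2

/-- `f` is monotone. -/
def Mono (f : (Fin n → Bool) → ℝ) : Prop :=
  ∀ x y : Fin n → Bool, (∀ i, x i ≤ y i) → f x ≤ f y


/-- one-variable character values -/
noncomputable def chb (p : ℝ) (b : Bool) : ℝ :=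
  ((if b then (1 : ℝ) else 0) - p) / Real.sqrt (p * (1 - p))

/-- the polynomial with coefficients `a` on subsets of `A`, with noise -/
noncomputable def pol (p ρ : ℝ) (A : Finset (Fin n)) (a : Finset (Fin n) → ℝ)
    (x : Fin n → Bool) : ℝ :=
  ∑ S ∈ A.powerset, ρ ^ S.card * a S * chi p S x

/-- sum of squared coefficients above `S` inside `A` -/
noncomputable def wt (A : Finset (Fin n)) (a : Finset (Fin n) → ℝ) (S : Finset (Fin n)) : ℝ :=
  ∑ T ∈ A.powerset, if S ⊆ T then a T ^ 2 else 0

lemma wt_nonneg (A : Finset (Fin n)) (a : Finset (Fin n) → ℝ) (S : Finset (Fin n)) :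
    0 ≤ wt A a S := by
  unfold wt
  refine Finset.sum_nonneg fun T _ => ?_
  split_ifs <;> positivity

lemma Ep_avg (p : ℝ) (i : Fin n) (H : Bool → (Fin n → Bool) → ℝ)
    (hH : ∀ b c x, H b (Function.update x i c) = H b x) :
    Ep p (fun x => H (x i) x) = Ep p (fun x => p * H true x + (1 - p) * H false x) := by
  have key : ∀ K : (Fin n → Bool) → ℝ, Ep p K = ∑ y : {j // j ≠ i} → Bool,
      (∏ j, if y j then p else 1 - p) *
        (p * K ((Equiv.funSplitAt i Bool).symm (true, y)) +
          (1 - p) * K ((Equiv.funSplitAt i Bool).symm (false, y))) := by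
    intro K
    unfold Ep
    rw [← (Equiv.funSplitAt i Bool).symm.sum_comp, Fintype.sum_prod_type_right]
    refine Finset.sum_congr rfl fun y _ => ?_
    have hw : ∀ b : Bool, (∏ j, if (Equiv.funSplitAt i Bool).symm (b, y) j then p else 1 - p)
        = (if b then p else 1 - p) * ∏ j, if y j then p else 1 - p := by
      intro b
      rw [Fintype.prod_eq_mul_prod_subtype_ne _ i]
      congr 1
      · simp [Equiv.funSplitAt]
      · refine Finset.prod_congr rfl fun j _ => ?_
        have := j.2
        simp [Equiv.funSplitAt, this]
    rw [Fintype.sum_bool, hw, hw]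
    simp
    ring
  rw [key, key]
  refine Finset.sum_congr rfl fun y _ => ?_
  have hu : ∀ b c : Bool, H b ((Equiv.funSplitAt i Bool).symm (c, y))
      = H b ((Equiv.funSplitAt i Bool).symm (true, y)) := by
    intro b c
    rw [← hH b true ((Equiv.funSplitAt i Bool).symm (c, y))]
    congr 1
    ext j
    by_cases h : j = i
    · subst h; simp [Equiv.funSplitAt]
    · simp [Equiv.funSplitAt, h]
  have hi : ∀ c : Bool, (Equiv.funSplitAt i Bool).symm (c, y) i = c := by
    intro c; simp [Equiv.funSplitAt]
  rw [hi, hi, hu true false, hu false false]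
  ring

lemma Ep_mono (p : ℝ) (hp : 0 < p) (hp' : p ≤ 1/2) (F G : (Fin n → Bool) → ℝ)
    (h : ∀ x, F x ≤ G x) : Ep p F ≤ Ep p G := by
  unfold Ep
  refine Finset.sum_le_sum fun x _ => ?_
  refine mul_le_mul_of_nonneg_left (h x) (Finset.prod_nonneg fun i _ => ?_)
  split_ifs <;> linarith

lemma Ep_add (p : ℝ) (F G : (Fin n → Bool) → ℝ) :
    Ep p (fun x => F x + G x) = Ep p F + Ep p G := by
  unfold Ep
  rw [← Finset.sum_add_distrib]
  exact Finset.sum_congr rfl fun x _ => by ring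

lemma Ep_smul (p c : ℝ) (F : (Fin n → Bool) → ℝ) :
    Ep p (fun x => c * F x) = c * Ep p F := by
  unfold Ep
  rw [Finset.mul_sum]
  exact Finset.sum_congr rfl fun x _ => by ring

lemma Ep_const (p : ℝ) (c : ℝ) : Ep (n := n) p (fun _ => c) = c := by
  unfold Ep
  rw [← Finset.sum_mul]
  have := Finset.prod_univ_sum (fun _ : Fin n => (Finset.univ : Finset Bool))
    (fun _ b => if b then p else 1 - p)
  rw [Fintype.piFinset_univ] at this
  rw [← this]
  simp

lemma chi_update (p : ℝ) (A : Finset (Fin n)) (i : Fin n) (hi : i ∉ A) (x : Fin n → Bool)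
    (c : Bool) : chi p A (Function.update x i c) = chi p A x := by
  unfold chi
  refine Finset.prod_congr rfl fun j hj => ?_
  have : j ≠ i := fun h => hi (h ▸ hj)
  rw [Function.update_of_ne this]

lemma pol_update (p ρ : ℝ) (A : Finset (Fin n)) (i : Fin n) (hi : i ∉ A)
    (a : Finset (Fin n) → ℝ) (x : Fin n → Bool)
    (c : Bool) : pol p ρ A a (Function.update x i c) = pol p ρ A a x := by
  unfold pol
  refine Finset.sum_congr rfl fun S hS => ?_
  rw [chi_update p S i (fun h => hi (Finset.mem_powerset.1 hS h))]

lemma pol_insert (p ρ : ℝ) (A : Finset (Fin n)) (i : Fin n) (hi : i ∉ A)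
    (a : Finset (Fin n) → ℝ) (x : Fin n → Bool) :
    pol p ρ (insert i A) a x =
      pol p ρ A a x + ρ * chb p (x i) * pol p ρ A (fun S => a (insert i S)) x := by
  unfold pol
  rw [Finset.sum_powerset_insert hi, Finset.mul_sum]
  congr 1
  refine Finset.sum_congr rfl fun S hS => ?_
  have h : i ∉ S := fun h => hi (Finset.mem_powerset.1 hS h)
  rw [Finset.card_insert_of_notMem h]
  have : chi p (insert i S) x = chb p (x i) * chi p S x := by
    unfold chi chb
    rw [Finset.prod_insert h]
  rw [this]
  ring

lemma wt_insert_of (A : Finset (Fin n)) (i : Fin n) (hi : i ∉ A)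
    (a : Finset (Fin n) → ℝ) (S : Finset (Fin n)) (hS : S ⊆ A) :
    wt (insert i A) a S = wt A a S + wt A (fun S => a (insert i S)) S := by
  unfold wt
  rw [Finset.sum_powerset_insert hi]
  congr 1
  refine Finset.sum_congr rfl fun T hT => ?_
  have h : i ∉ S := fun h => hi (hS h)
  simp only [Finset.subset_insert_iff_of_notMem h]

lemma wt_insert_insert (A : Finset (Fin n)) (i : Fin n) (hi : i ∉ A)
    (a : Finset (Fin n) → ℝ) (S : Finset (Fin n)) (hS : S ⊆ A) :
    wt (insert i A) a (insert i S) = wt A (fun S => a (insert i S)) S := by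
  unfold wt
  rw [Finset.sum_powerset_insert hi]
  have h : i ∉ S := fun h => hi (hS h)
  rw [Finset.sum_eq_zero, zero_add]
  · refine Finset.sum_congr rfl fun T hT => ?_
    simp only [Finset.insert_subset_insert_iff h]
  · intro T hT
    rw [if_neg]
    intro h2
    exact hi (Finset.mem_powerset.1 hT (h2 (Finset.mem_insert_self _ _)))

lemma chb_moments (p : ℝ) (hp : 0 < p) (hp' : p ≤ 1/2) :
    p * chb p true + (1 - p) * chb p false = 0 ∧
    p * chb p true ^ 2 + (1 - p) * chb p false ^ 2 = 1 ∧
    (p * chb p true ^ 3 + (1 - p) * chb p false ^ 3) ^ 2 ≤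
      ((1 - p) ^ 3 + p ^ 3) / (p * (1 - p)) ∧
    p * chb p true ^ 4 + (1 - p) * chb p false ^ 4 = ((1 - p) ^ 3 + p ^ 3) / (p * (1 - p)) := by
  have hq : 0 < 1 - p := by linarith
  have hpq : 0 < p * (1 - p) := by positivity
  obtain ⟨s, hs⟩ : ∃ s, s = Real.sqrt (p * (1 - p)) := ⟨_, rfl⟩
  have hs0 : 0 < s := by rw [hs]; exact Real.sqrt_pos.2 hpq
  have hs2 : s ^ 2 = p * (1 - p) := by rw [hs]; exact Real.sq_sqrt hpq.le
  have h1 : chb p true = (1 - p) / s := by simp [chb, hs]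
  have h0 : chb p false = - p / s := by simp [chb, hs]
  rw [h1, h0]
  refine ⟨?_, ?_, ?_, ?_⟩
  · field_simp; try ring
  · field_simp; rw [hs2]; ring
  · have : (p * ((1 - p) / s) ^ 3 + (1 - p) * (-p / s) ^ 3) ^ 2 =
      (1 - 2 * p) ^ 2 / (p * (1 - p)) := by
      have : (p * ((1 - p) / s) ^ 3 + (1 - p) * (-p / s) ^ 3) ^ 2
        = (p * (1 - p)) ^ 2 * (1 - 2 * p) ^ 2 / (s ^ 2) ^ 3 := by
        field_simp; try ring
      rw [this, hs2]; field_simp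
    rw [this]
    gcongr
    nlinarith
  · have : p * ((1 - p) / s) ^ 4 + (1 - p) * (-p / s) ^ 4
        = (p * (1 - p)) * ((1 - p) ^ 3 + p ^ 3) / (s ^ 2) ^ 2 := by
        field_simp; try ring
    rw [this, hs2]; field_simp

lemma two_point (p ρ lam : ℝ) (hp : 0 < p) (hp' : p ≤ 1/2)
    (hρ2 : 12 * ρ ^ 2 ≤ 1)
    (hlam : lam = ((1 - p) ^ 3 + p ^ 3) / (p * (1 - p))) (u u' v v' : ℝ) :
    p * ((u + ρ * chb p true * u') ^ 2 * (v + ρ * chb p true * v') ^ 2) +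
    (1 - p) * ((u + ρ * chb p false * u') ^ 2 * (v + ρ * chb p false * v') ^ 2) ≤
    u ^ 2 * v ^ 2 + (u ^ 2 * v' ^ 2 + (u' ^ 2 * v ^ 2 + 3 * lam * ρ ^ 4 * (u' ^ 2 * v' ^ 2))) := by
  obtain ⟨m1, m2, m3, m4⟩ := chb_moments p hp hp'
  rw [← hlam] at m3 m4
  generalize chb p true = c at *
  generalize chb p false = d at *
  obtain ⟨s, hs⟩ : ∃ s, s = p * c ^ 3 + (1 - p) * d ^ 3 := ⟨_, rfl⟩
  rw [← hs] at m3
  have e : p * ((u + ρ * c * u') ^ 2 * (v + ρ * c * v') ^ 2) +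
    (1 - p) * ((u + ρ * d * u') ^ 2 * (v + ρ * d * v') ^ 2) =
    u ^ 2 * v ^ 2 + ρ ^ 2 * (u ^ 2 * v' ^ 2 + u' ^ 2 * v ^ 2 + 4 * (u * u' * v * v'))
     + ρ ^ 3 * s * (2 * u * u' * v' ^ 2 + 2 * v * v' * u' ^ 2) + lam * ρ ^ 4 * (u' ^ 2 * v' ^ 2) := by
    rw [← m4, hs]
    linear_combination (2 * ρ * u * v * (u' * v + u * v')) * m1 +
      ρ ^ 2 * (u ^ 2 * v' ^ 2 + u' ^ 2 * v ^ 2 + 4 * (u * u' * v * v')) * m2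
  rw [e]
  have a1 : ρ ^ 2 * (4 * (u * u' * v * v')) ≤ ρ ^ 2 * (2 * (u ^ 2 * v' ^ 2 + u' ^ 2 * v ^ 2)) := by
    refine mul_le_mul_of_nonneg_left ?_ (by positivity)
    nlinarith [sq_nonneg (u * v' - u' * v)]
  have a2 : ρ ^ 3 * s * (2 * u * u' * v' ^ 2) ≤ ρ ^ 2 * (u ^ 2 * v' ^ 2)
      + s ^ 2 * ρ ^ 4 * (u' ^ 2 * v' ^ 2) := by
    nlinarith [sq_nonneg (ρ * u * v' - s * ρ ^ 2 * u' * v')]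
  have a3 : ρ ^ 3 * s * (2 * v * v' * u' ^ 2) ≤ ρ ^ 2 * (u' ^ 2 * v ^ 2)
      + s ^ 2 * ρ ^ 4 * (u' ^ 2 * v' ^ 2) := by
    nlinarith [sq_nonneg (ρ * v * u' - s * ρ ^ 2 * u' * v')]
  have a4 : s ^ 2 * (ρ ^ 4 * (u' ^ 2 * v' ^ 2)) ≤ lam * (ρ ^ 4 * (u' ^ 2 * v' ^ 2)) :=
    mul_le_mul_of_nonneg_right m3 (by positivity)
  have a5 : 12 * ρ ^ 2 * (u ^ 2 * v' ^ 2 + u' ^ 2 * v ^ 2) ≤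
      1 * (u ^ 2 * v' ^ 2 + u' ^ 2 * v ^ 2) := mul_le_mul_of_nonneg_right hρ2 (by positivity)
  have a6 : 0 ≤ u ^ 2 * v' ^ 2 + u' ^ 2 * v ^ 2 := by positivity
  linarith

lemma lam_pos (p lam : ℝ) (hp : 0 < p) (hp' : p ≤ 1/2)
    (hlam : lam = ((1 - p) ^ 3 + p ^ 3) / (p * (1 - p))) : 0 < lam := by
  have hq : 0 < 1 - p := by linarith
  rw [hlam]; positivity

lemma main_ind (p ρ lam : ℝ) (hp : 0 < p) (hp' : p ≤ 1/2)
    (hρ2 : 12 * ρ ^ 2 ≤ 1)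
    (hlam : lam = ((1 - p) ^ 3 + p ^ 3) / (p * (1 - p))) (A : Finset (Fin n)) :
    ∀ a b : Finset (Fin n) → ℝ,
    Ep p (fun x => pol p ρ A a x ^ 2 * pol p ρ A b x ^ 2) ≤
      ∑ S ∈ A.powerset, (3 * lam * ρ ^ 4) ^ S.card * (wt A a S * wt A b S) := by
  have hl := lam_pos p lam hp hp' hlam
  induction A using Finset.induction_on with
  | empty =>
    intro a b
    simp [pol, wt, chi, Ep_const]
  | insert i A hi ih =>
    intro a b
    set a' : Finset (Fin n) → ℝ := fun S => a (insert i S) with ha'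
    set b' : Finset (Fin n) → ℝ := fun S => b (insert i S) with hb'
    have e1 : Ep p (fun x => pol p ρ (insert i A) a x ^ 2 * pol p ρ (insert i A) b x ^ 2) =
        Ep p (fun x => (fun (t : Bool) (x : Fin n → Bool) =>
          (pol p ρ A a x + ρ * chb p t * pol p ρ A a' x) ^ 2 *
          (pol p ρ A b x + ρ * chb p t * pol p ρ A b' x) ^ 2) (x i) x) := by
      congr 1
      funext x
      rw [pol_insert p ρ A i hi, pol_insert p ρ A i hi]
    rw [e1, Ep_avg p i (fun (t : Bool) (x : Fin n → Bool) =>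
          (pol p ρ A a x + ρ * chb p t * pol p ρ A a' x) ^ 2 *
          (pol p ρ A b x + ρ * chb p t * pol p ρ A b' x) ^ 2) (by
      intro t c x
      simp only [pol_update p ρ A i hi])]
    refine (Ep_mono p hp hp' _ _ fun x => two_point p ρ lam hp hp' hρ2 hlam _ _ _ _).trans ?_
    rw [Ep_add, Ep_add, Ep_add, Ep_smul]
    have hβ : 0 ≤ 3 * lam * ρ ^ 4 := by positivity
    refine (add_le_add (ih a b) (add_le_add (ih a b') (add_le_add (ih a' b)
      (mul_le_mul_of_nonneg_left (ih a' b') hβ)))).trans ?_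
    rw [Finset.sum_powerset_insert hi, Finset.mul_sum, ← Finset.sum_add_distrib,
      ← Finset.sum_add_distrib, ← Finset.sum_add_distrib, ← Finset.sum_add_distrib]
    refine Finset.sum_le_sum fun S hS => ?_
    have hS' := Finset.mem_powerset.1 hS
    have h : i ∉ S := fun h => hi (hS' h)
    rw [wt_insert_of A i hi a S hS', wt_insert_of A i hi b S hS',
      wt_insert_insert A i hi a S hS', wt_insert_insert A i hi b S hS',
      Finset.card_insert_of_notMem h]
    rw [← ha', ← hb']
    have : 0 ≤ (3 * lam * ρ ^ 4) ^ S.card * (wt A a' S * wt A b' S) :=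
      mul_nonneg (pow_nonneg hβ _) (mul_nonneg (wt_nonneg _ _ _) (wt_nonneg _ _ _))
    rw [pow_succ (3 * lam * ρ ^ 4)]
    generalize (3 * lam * ρ ^ 4) ^ S.card = t at *
    generalize 3 * lam * ρ ^ 4 = r at *
    linarith

lemma parseval (p : ℝ) (hp : 0 < p) (hp' : p ≤ 1/2) (A : Finset (Fin n)) :
    ∀ a : Finset (Fin n) → ℝ,
    Ep p (fun x => pol p 1 A a x ^ 2) = ∑ T ∈ A.powerset, a T ^ 2 := by
  obtain ⟨m1, m2, -, -⟩ := chb_moments p hp hp'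
  induction A using Finset.induction_on with
  | empty =>
    intro a
    simp [pol, chi, Ep_const]
  | insert i A hi ih =>
    intro a
    have e1 : Ep p (fun x => pol p 1 (insert i A) a x ^ 2) =
        Ep p (fun x => (fun (t : Bool) (x : Fin n → Bool) =>
          (pol p 1 A a x + 1 * chb p t * pol p 1 A (fun S => a (insert i S)) x) ^ 2) (x i) x) := by
      congr 1
      funext x
      rw [pol_insert p 1 A i hi]
    rw [e1, Ep_avg p i (fun (t : Bool) (x : Fin n → Bool) =>
          (pol p 1 A a x + 1 * chb p t * pol p 1 A (fun S => a (insert i S)) x) ^ 2) (by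
      intro t c x
      simp only [pol_update p 1 A i hi]), Finset.sum_powerset_insert hi, ← ih, ← ih, ← Ep_add]
    congr 1
    funext x
    linear_combination (2 * pol p 1 A a x * pol p 1 A (fun S => a (insert i S)) x) * m1
      + (pol p 1 A (fun S => a (insert i S)) x) ^ 2 * m2

lemma sum_superset (S : Finset (Fin n)) (g : Finset (Fin n) → Finset (Fin n) → ℝ) :
    ∑ T ∈ Finset.univ.filter (fun T => S ⊆ T), g T (T \ S) =
      ∑ U ∈ (Finset.univ \ S).powerset, g (S ∪ U) U := by
  refine Finset.sum_bij' (fun T _ => T \ S) (fun U _ => S ∪ U) ?_ ?_ ?_ ?_ ?_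
  · intro T _
    rw [Finset.mem_powerset]
    exact Finset.sdiff_subset_sdiff (Finset.subset_univ _) le_rfl
  · intro U _
    simp
  · intro T hT
    simp only [Finset.mem_filter] at hT
    exact Finset.union_sdiff_of_subset hT.2
  · intro U hU
    rw [Finset.mem_powerset] at hU
    have : Disjoint S U := by
      rw [Finset.disjoint_left]
      intro j hj hj'
      exact (Finset.mem_sdiff.1 (hU hj')).2 hj
    exact Finset.union_sdiff_cancel_left this
  · intro T hT
    simp only [Finset.mem_filter] at hT
    rw [Finset.union_sdiff_of_subset hT.2]

lemma Ep_nonneg (p : ℝ) (hp : 0 < p) (hp' : p ≤ 1/2) (F : (Fin n → Bool) → ℝ)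
    (h : ∀ x, 0 ≤ F x) : 0 ≤ Ep p F := by
  have := Ep_mono p hp hp' (fun _ => 0) F h
  rwa [Ep_const] at this

lemma pnorm_two (p : ℝ) (hp : 0 < p) (hp' : p ≤ 1/2) (F : (Fin n → Bool) → ℝ) :
    pnorm p 2 F ^ 4 = (Ep p fun x => F x ^ 2) ^ 2 := by
  have h : (fun x => |F x| ^ (2 : ℝ)) = fun x => F x ^ 2 := by
    funext x
    rw [Real.rpow_two, sq_abs]
  have h0 := Ep_nonneg p hp hp' (fun x => F x ^ 2) (fun x => by positivity)
  unfold pnorm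
  rw [h, ← Real.sqrt_eq_rpow]
  calc _ = (Real.sqrt (Ep p fun x => F x ^ 2) ^ 2) ^ 2 := by ring
    _ = _ := by rw [Real.sq_sqrt h0]

lemma pnorm_four (p : ℝ) (hp : 0 < p) (hp' : p ≤ 1/2) (F : (Fin n → Bool) → ℝ) :
    pnorm p 4 F ^ 4 = Ep p fun x => F x ^ 2 * F x ^ 2 := by
  have h : (fun x => |F x| ^ (4 : ℝ)) = fun x => F x ^ 2 * F x ^ 2 := by
    funext x
    have : |F x| ^ (4 : ℝ) = |F x| ^ (4 : ℕ) := by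
      rw [← Real.rpow_natCast]; norm_num
    rw [this, ← sq_abs]
    ring
  have h0 := Ep_nonneg p hp hp' (fun x => F x ^ 2 * F x ^ 2) (fun x => by positivity)
  unfold pnorm
  rw [h, ← Real.rpow_natCast, ← Real.rpow_mul h0]
  norm_num

lemma deriv_norm (p : ℝ) (hp : 0 < p) (hp' : p ≤ 1/2) (S : Finset (Fin n))
    (f : (Fin n → Bool) → ℝ) :
    (Ep p fun x => derivS p S f x ^ 2) =
      ∑ T ∈ Finset.univ.filter (fun T => S ⊆ T), coeff p f T ^ 2 := by
  rw [sum_superset S (fun T _ => coeff p f T ^ 2)]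
  rw [← parseval p hp hp' (Finset.univ \ S) (fun U => coeff p f (S ∪ U))]
  congr 1
  funext x
  congr 1
  unfold derivS pol
  rw [sum_superset S (fun T U => coeff p f T * chi p U x)]
  simp

/-- the key hypercontractive estimate in terms of derivatives and
generalised influences. -/
theorem statement1 {n : ℕ} (p ρ : ℝ) (hp : 0 < p) (hp' : p ≤ 1/2)
    (hρ : 0 < ρ) (hρ' : ρ ≤ 1 / Real.sqrt 12)
    (lam : ℝ) (hlam : lam = ((1 - p) ^ 3 + p ^ 3) / (p * (1 - p)))
    (f : (Fin n → Bool) → ℝ) :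
    pnorm p 4 (noise p ρ f) ^ 4 ≤
      (∑ S : Finset (Fin n), (3 * lam * ρ ^ 4) ^ S.card * pnorm p 2 (derivS p S f) ^ 4) ∧
    (∑ S : Finset (Fin n), (3 * lam * ρ ^ 4) ^ S.card * pnorm p 2 (derivS p S f) ^ 4) ≤
      ∑ S : Finset (Fin n), (3 * (p * (1 - p)) * ρ ^ 4) ^ S.card * genInf p S f ^ 2 := by
  have hρ2 : 12 * ρ ^ 2 ≤ 1 := by
    have h12 : (0 : ℝ) < Real.sqrt 12 := Real.sqrt_pos.2 (by norm_num)
    have h1 : ρ * Real.sqrt 12 ≤ 1 := (le_div_iff₀ h12).1 hρ'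
    have h2 : Real.sqrt 12 ^ 2 = 12 := Real.sq_sqrt (by norm_num)
    have h3 : (ρ * Real.sqrt 12) ^ 2 ≤ 1 := pow_le_one₀ (by positivity) h1
    rw [mul_pow, h2] at h3
    linarith
  have hq : 0 < 1 - p := by linarith
  have hpq : 0 < p * (1 - p) := by positivity
  have hl := lam_pos p lam hp hp' hlam
  constructor
  · rw [pnorm_four p hp hp']
    have h := main_ind p ρ lam hp hp' hρ2 hlam Finset.univ (coeff p f) (coeff p f)
    rw [Finset.powerset_univ] at h
    refine le_trans (le_of_eq ?_) (h.trans (le_of_eq ?_))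
    · simp only [noise, pol, Finset.powerset_univ]
    · refine Finset.sum_congr rfl fun S _ => ?_
      rw [pnorm_two p hp hp', deriv_norm p hp hp', wt, Finset.powerset_univ, Finset.sum_filter, sq]
  · refine Finset.sum_le_sum fun S _ => ?_
    rw [pnorm_two p hp hp', deriv_norm p hp hp', genInf]
    generalize (∑ T ∈ Finset.univ.filter (fun T => S ⊆ T), coeff p f T ^ 2) = w
    have e : (3 * (p * (1 - p)) * ρ ^ 4) ^ S.card * (w / (p * (1 - p)) ^ S.card) ^ 2
        = (3 * (1 / (p * (1 - p))) * ρ ^ 4) ^ S.card * w ^ 2 := by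
      have : 3 * (1 / (p * (1 - p))) * ρ ^ 4 =
        (3 * (p * (1 - p)) * ρ ^ 4) / (p * (1 - p)) ^ 2 := by field_simp
      rw [this, div_pow, div_pow, ← pow_mul, ← pow_mul, mul_comm 2]
      ring
    rw [e]
    have : lam ≤ 1 / (p * (1 - p)) := by
      rw [hlam]
      gcongr
      nlinarith
    gcongr

end GlobalHC
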